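/- For every integer n ≥ 0, every (a b; c d) ∈ SL₂(ℤ), and every τ ∈ ℍ, the completion V̂_{2n}(τ) := ∑_{0≤j≤n} (−1)^{n+j} 3^j π^{2n−j} V_{2n−2j}(q) / ((2v)^j j! (2n−2j)!) satisfies V̂_{2n}((aτ+b)/(cτ+d)) = (cτ+d)^{2n} V̂_{2n}(τ); moreover V̂_{2n} is a polynomial in 1/v of degree exactly n with holomorphic coefficients, so it is an almost holomorphic modular form of weight 2n and depth n. -/

import Mathlib

/-!
Completing the square gives `V_{2n} = θ_n / θ_0` with
`θ_n = ∑ (-1)^j (6j+1)^{2n} q^{(6j+1)²/24}`, where `θ_0` is the Dedekind eta function by Euler's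
pentagonal number theorem. As `q dθ_n/dq = θ_{n+1} / 24`, the logarithmic derivative of eta gives
`V_2 = E_2`, and the quotient rule gives Ramanujan's recursion
`24 q dV_{2n}/dq = V_{2n+2} - V_2 V_{2n}`. For the generating series
`W(τ; X) = ∑ (-π²)^n V_{2n} X^n / (2n)!` the recursion says exactly that
`12πi ∂W/∂τ = (4X ∂²/∂X² + 2 ∂/∂X + π² E_2) W`, an equation which determines `W` from its constant
term. The quasimodularity of `E_2` makes `W(γτ; X)` and `e^{3πic(cτ+d)X} W(τ; (cτ+d)²X)` solutions
of the same equation with the same constant term, so they agree. Finally `V̂_{2n}` is the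
coefficient of `X^n` in `e^{3πX/(2v)} W(τ; X)`, and since `1 / Im γτ = (cτ+d)²/v - 2ic(cτ+d)` the
two exponentials combine into `e^{3π(cτ+d)²X/(2v)}`.
-/

open Complex Filter
open scoped Real

noncomputable section

/-- `q = e^{2πiτ}`. -/
def qq (τ : ℂ) : ℂ := Complex.exp (2 * (π : ℂ) * Complex.I * τ)

/-- Ramanujan's series `V_{2n}(q)`:
numerator `∑_{j∈ℤ} (−1)^j (6j+1)^{2n} q^{j(3j+1)/2}` divided by
denominator `∑_{j∈ℤ} (−1)^j q^{j(3j+1)/2}`. -/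
def Vram (n : ℕ) (q : ℂ) : ℂ :=
  (∑' j : ℤ, (-1 : ℂ) ^ j * ((6 * j + 1 : ℤ) : ℂ) ^ (2 * n) * q ^ (j * (3 * j + 1) / 2)) /
    (∑' j : ℤ, (-1 : ℂ) ^ j * q ^ (j * (3 * j + 1) / 2))

/-- The completion
`V̂_{2n}(τ) = ∑_{0≤j≤n} (−1)^{n+j} 3^j π^{2n−j} V_{2n−2j}(q) / ((2v)^j j! (2n−2j)!)`. -/
def Vhat (n : ℕ) (τ : ℂ) : ℂ :=
  ∑ j ∈ Finset.range (n + 1),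
    (-1 : ℂ) ^ (n + j) * 3 ^ j * (π : ℂ) ^ (2 * n - j) * Vram (n - j) (qq τ) /
      ((2 * (τ.im : ℂ)) ^ j * (Nat.factorial j : ℂ) * (Nat.factorial (2 * n - 2 * j) : ℂ))

open scoped ComplexConjugate UpperHalfPlane MatrixGroups PowerSeries
open PowerSeries (X rescale coeff coeff_rescale coeff_derivative coeff_smul)
open UpperHalfPlane (denom ofComplex ofComplex_apply upperHalfPlaneSet isOpen_upperHalfPlaneSet)
open EisensteinSeries (E2)

/-! ### Power series and the heat equation -/

section HeatOperator

variable {R : Type*} [CommRing R]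

/-- The exponential series `e^{aX}`. -/
def expSeries [Algebra ℚ R] (a : R) : R⟦X⟧ := rescale a (PowerSeries.exp R)

lemma coeff_expSeries {K : Type*} [Field K] [Algebra ℚ K] (a : K) (n : ℕ) :
    coeff n (expSeries a) = a ^ n / n.factorial := by
  simp [expSeries, coeff_rescale, PowerSeries.coeff_exp, div_eq_mul_inv]

lemma expSeries_mul_expSeries [Algebra ℚ R] (a b : R) :
    expSeries a * expSeries b = expSeries (a + b) :=
  PowerSeries.exp_mul_exp_eq_exp_add a b

lemma rescale_expSeries [Algebra ℚ R] (a b : R) :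
    rescale b (expSeries a) = expSeries (a * b) :=
  PowerSeries.rescale_rescale _ a b

/-- The operator `4X d²/dX² + 2 d/dX`, which is `d²/dY²` in the variable `X = Y²`. -/
def heatOp (F : R⟦X⟧) : R⟦X⟧ :=
  4 * X * d⁄dX R (d⁄dX R F) + 2 * d⁄dX R F

lemma derivative_rescale (a : R) (F : R⟦X⟧) :
    d⁄dX R (rescale a F) = a • rescale a (d⁄dX R F) := by
  ext n
  simp only [coeff_derivative, coeff_rescale, coeff_smul, smul_eq_mul]
  ring

lemma derivative_expSeries [Algebra ℚ R] (a : R) :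
    d⁄dX R (expSeries a) = a • expSeries a := by
  rw [expSeries, derivative_rescale, PowerSeries.derivative_exp]

lemma coeff_heatOp (F : R⟦X⟧) (n : ℕ) :
    coeff n (heatOp F) = (2 * n + 2) * (2 * n + 1) * coeff (n + 1) F := by
  rw [heatOp, map_add, mul_assoc, ← map_ofNat PowerSeries.C 4, ← map_ofNat PowerSeries.C 2,
    PowerSeries.coeff_C_mul, PowerSeries.coeff_C_mul]
  cases n with
  | zero => simp [coeff_derivative]
  | succ n =>
    simp only [PowerSeries.coeff_succ_X_mul, coeff_derivative]
    push_cast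
    ring

lemma heatOp_rescale (b : R) (F : R⟦X⟧) : heatOp (rescale b F) = b • rescale b (heatOp F) := by
  ext n
  simp only [coeff_heatOp, coeff_rescale, coeff_smul, smul_eq_mul]
  ring

lemma heatOp_expSeries_mul [Algebra ℚ R] (a : R) (F : R⟦X⟧) :
    heatOp (expSeries a * F) = expSeries a *
      (heatOp F + (8 * a) • (X * d⁄dX R F) + (4 * a ^ 2) • (X * F) + (2 * a) • F) := by
  simp only [heatOp, Derivation.leibniz, map_add, derivative_expSeries, smul_eq_mul,
    PowerSeries.smul_eq_C_mul, PowerSeries.derivative_C, map_mul, map_pow, map_ofNat]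
  ring

end HeatOperator

section CoefficientwiseDerivative

variable {𝕜 : Type*} [NontriviallyNormedField 𝕜] {F G : 𝕜 → 𝕜⟦X⟧} {F' G' : 𝕜⟦X⟧} {τ : 𝕜}

/-- The family of power series `F` has derivative `F'` at `τ` coefficientwise; no convergence of the
series is involved. -/
def HasCoeffDerivAt (F : 𝕜 → 𝕜⟦X⟧) (F' : 𝕜⟦X⟧) (τ : 𝕜) : Prop :=
  ∀ n, HasDerivAt (fun z ↦ coeff n (F z)) (coeff n F') τ

namespace HasCoeffDerivAt

lemma mul (hF : HasCoeffDerivAt F F' τ) (hG : HasCoeffDerivAt G G' τ) :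
    HasCoeffDerivAt (fun z ↦ F z * G z) (F' * G τ + F τ * G') τ := by
  intro n
  simp only [PowerSeries.coeff_mul, map_add, ← Finset.sum_add_distrib]
  exact HasDerivAt.fun_sum fun p _ ↦ (hF p.1).mul (hG p.2)

protected lemma rescale {b : 𝕜 → 𝕜} {b' : 𝕜} (hF : HasCoeffDerivAt F F' τ)
    (hb : HasDerivAt b b' τ) :
    HasCoeffDerivAt (fun z ↦ rescale (b z) (F z))
      (b' • (X * rescale (b τ) (d⁄dX 𝕜 (F τ))) + rescale (b τ) F') τ := by
  intro n
  simp only [coeff_rescale, map_add, coeff_smul, smul_eq_mul]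
  convert! (hb.pow n).mul (hF n) using 2
  cases n with
  | zero => simp
  | succ n =>
    simp only [PowerSeries.coeff_succ_X_mul, coeff_rescale, coeff_derivative, Nat.add_sub_cancel,
      Nat.cast_add, Nat.cast_one]
    ring

protected lemma expSeries [Algebra ℚ 𝕜] {a : 𝕜 → 𝕜} {a' : 𝕜} (ha : HasDerivAt a a' τ) :
    HasCoeffDerivAt (fun z ↦ expSeries (a z)) (a' • (X * expSeries (a τ))) τ := by
  have hconst : HasCoeffDerivAt (fun _ ↦ PowerSeries.exp 𝕜) 0 τ := fun n ↦ by
    simpa using hasDerivAt_const τ (coeff n (PowerSeries.exp 𝕜))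
  simpa [expSeries, PowerSeries.derivative_exp] using hconst.rescale ha

lemma comp {φ : 𝕜 → 𝕜} {φ' : 𝕜} (hF : HasCoeffDerivAt F F' (φ τ)) (hφ : HasDerivAt φ φ' τ) :
    HasCoeffDerivAt (F ∘ φ) (φ' • F') τ := fun n ↦ by
  simpa only [coeff_smul, smul_eq_mul, mul_comm φ'] using! (hF n).comp τ hφ

end HasCoeffDerivAt

end CoefficientwiseDerivative

section HeatEquation

variable {𝕜 : Type*} [NontriviallyNormedField 𝕜]

/-- The family of power series `F` satisfies, at the point `τ`, the heat equation
`κ ∂F/∂τ = (4X ∂²/∂X² + 2 ∂/∂X - ψ) F` with potential `ψ`. -/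
def SolvesHeatEquationAt (κ ψ : 𝕜) (F : 𝕜 → 𝕜⟦X⟧) (τ : 𝕜) : Prop :=
  ∃ F', HasCoeffDerivAt F F' τ ∧ κ • F' = heatOp (F τ) - ψ • F τ

namespace SolvesHeatEquationAt

lemma eqOn [CharZero 𝕜] {U : Set 𝕜} (hU : IsOpen U) {F G : 𝕜 → 𝕜⟦X⟧} {κ ψ : 𝕜 → 𝕜}
    (hF : ∀ τ ∈ U, SolvesHeatEquationAt (κ τ) (ψ τ) F τ)
    (hG : ∀ τ ∈ U, SolvesHeatEquationAt (κ τ) (ψ τ) G τ)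
    (h0 : ∀ τ ∈ U, coeff 0 (F τ) = coeff 0 (G τ)) : Set.EqOn F G U := by
  -- The equation expresses the coefficient of `X^(n+1)` through that of `X^n` and its derivative.
  suffices ∀ n, ∀ τ ∈ U, coeff n (F τ) = coeff n (G τ) from
    fun τ hτ ↦ PowerSeries.ext fun n ↦ this n τ hτ
  intro n
  induction n with
  | zero => exact h0
  | succ n ih =>
    intro τ hτ
    obtain ⟨F', hF', hFeq⟩ := hF τ hτ
    obtain ⟨G', hG', hGeq⟩ := hG τ hτ
    have hFG : (fun z ↦ coeff n (F z)) =ᶠ[nhds τ] fun z ↦ coeff n (G z) :=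
      eventuallyEq_of_mem (hU.mem_nhds hτ) ih
    have hderiv : coeff n F' = coeff n G' :=
      (hF' n).unique ((hG' n).congr_of_eventuallyEq hFG)
    have hheat : coeff n (heatOp (F τ)) = coeff n (heatOp (G τ)) := by
      have hFn := congrArg (coeff n) hFeq
      have hGn := congrArg (coeff n) hGeq
      simp only [map_sub, coeff_smul] at hFn hGn
      rwa [hderiv, hGn, ih τ hτ, sub_left_inj, eq_comm] at hFn
    have hn : (2 * n + 2 : 𝕜) * (2 * n + 1) ≠ 0 := by norm_cast
    simpa only [coeff_heatOp, mul_right_inj' hn] using hheat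

lemma comp {F : 𝕜 → 𝕜⟦X⟧} {φ : 𝕜 → 𝕜} {κ ψ φ' τ : 𝕜} (hF : SolvesHeatEquationAt κ ψ F (φ τ))
    (hφ : HasDerivAt φ φ' τ) (hφ' : φ' ≠ 0) : SolvesHeatEquationAt (κ / φ') ψ (F ∘ φ) τ := by
  obtain ⟨F', hF', heq⟩ := hF
  refine ⟨φ' • F', hF'.comp hφ, ?_⟩
  rw [smul_smul, div_mul_cancel₀ _ hφ', heq, Function.comp_apply]

lemma expSeries_mul_rescale_sq [Algebra ℚ 𝕜] {F : 𝕜 → 𝕜⟦X⟧} {J : 𝕜 → 𝕜} {κ ψ c τ : 𝕜}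
    (hF : SolvesHeatEquationAt (4 * κ) ψ F τ) (hJ : HasDerivAt J c τ) :
    SolvesHeatEquationAt (4 * κ * J τ ^ 2) (J τ ^ 2 * ψ + 2 * κ * c * J τ)
      (fun z ↦ expSeries (κ * c * J z) * rescale (J z ^ 2) (F z)) τ := by
  obtain ⟨F', hF', heq⟩ := hF
  refine ⟨_, (HasCoeffDerivAt.expSeries (hJ.const_mul (κ * c))).mul (hF'.rescale (hJ.pow 2)), ?_⟩
  have hrescale : heatOp (rescale (J τ ^ 2) (F τ)) =
      (J τ ^ 2) • ((4 * κ) • rescale (J τ ^ 2) F' + ψ • rescale (J τ ^ 2) (F τ)) := by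
    rw [heatOp_rescale, sub_eq_iff_eq_add.mp heq.symm]
    ext n
    simp only [map_add, coeff_smul, coeff_rescale, smul_eq_mul]
    ring
  rw [heatOp_expSeries_mul, hrescale, derivative_rescale]
  simp only [PowerSeries.smul_eq_C_mul, map_add, map_mul, map_pow, map_ofNat, Nat.cast_ofNat,
    Nat.add_one_sub_one, pow_one]
  ring

end SolvesHeatEquationAt

end HeatEquation

/-! ### Euler's pentagonal number theorem -/

section PentagonalNumberTheorem

variable {𝕜 : Type*} [NormedField 𝕜] {x : 𝕜}

lemma norm_prod_one_sub_pow_le (hx : ‖x‖ < 1) (k n : ℕ) :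
    ‖∏ i ∈ Finset.range n, (1 - x ^ (k + i + 1))‖ ≤ Real.exp (1 - ‖x‖)⁻¹ := by
  rw [norm_prod]
  calc ∏ i ∈ Finset.range n, ‖1 - x ^ (k + i + 1)‖
      ≤ ∏ i ∈ Finset.range n, (1 + ‖x‖ ^ i) := by
        refine Finset.prod_le_prod (fun _ _ ↦ norm_nonneg _) fun i _ ↦ ?_
        refine (norm_sub_le _ _).trans ?_
        rw [norm_one, norm_pow]
        gcongr 1 + ?_
        exact pow_le_pow_of_le_one (norm_nonneg _) hx.le (by lia)
    _ ≤ Real.exp (∑ i ∈ Finset.range n, ‖x‖ ^ i) :=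
        Real.prod_one_add_le_exp_sum _ fun i ↦ by positivity
    _ ≤ Real.exp (1 - ‖x‖)⁻¹ := by
        rw [Real.exp_le_exp, ← tsum_geometric_of_lt_one (norm_nonneg _) hx]
        exact (summable_geometric_of_lt_one (norm_nonneg _) hx).sum_le_tsum _
          fun i _ ↦ by positivity

lemma norm_pow_mul_prod_one_sub_pow_le (hx : ‖x‖ < 1) (k n : ℕ) :
    ‖x ^ ((k + 1) * n) * ∏ i ∈ Finset.range (n + 1), (1 - x ^ (k + i + 1))‖ ≤
      ‖x‖ ^ n * Real.exp (1 - ‖x‖)⁻¹ := by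
  rw [norm_mul, norm_pow]
  gcongr ?_ * ?_
  · exact pow_le_pow_of_le_one (norm_nonneg _) hx.le (by nlinarith)
  · exact norm_prod_one_sub_pow_le hx k _

lemma tendsto_pentagonal_remainder (hx : ‖x‖ < 1) :
    Tendsto (fun k ↦ (-1) ^ (k + 1) * x ^ ((k + 1) * (3 * k + 4) / 2) *
      ∑' n, x ^ ((k + 1) * n) * ∏ i ∈ Finset.range (n + 1), (1 - x ^ (k + i + 1)))
      atTop (nhds 0) := by
  have hbound : Summable fun n ↦ ‖x‖ ^ n * Real.exp (1 - ‖x‖)⁻¹ :=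
    (summable_geometric_of_lt_one (norm_nonneg x) hx).mul_right _
  refine squeeze_zero_norm
    (a := fun k ↦ ‖x‖ ^ k * ∑' n, ‖x‖ ^ n * Real.exp (1 - ‖x‖)⁻¹) (fun k ↦ ?_) ?_
  · rw [norm_mul, norm_mul, norm_pow, norm_neg, norm_one, one_pow, one_mul, norm_pow]
    gcongr ?_ * ?_
    · refine pow_le_pow_of_le_one (norm_nonneg _) hx.le ?_
      rw [Nat.le_div_iff_mul_le two_pos]
      nlinarith
    · exact tsum_of_norm_bounded hbound.hasSum fun n ↦ norm_pow_mul_prod_one_sub_pow_le hx k n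
  · simpa using (tendsto_pow_atTop_nhds_zero_of_lt_one (norm_nonneg x) hx).mul_const _

variable [CompleteSpace 𝕜]

/-- Here `pentagonal (-j) = j(3j+1)/2`, matching the exponents of `Vram`. -/
lemma summable_neg_one_zpow_mul_pow_pentagonal (hx : ‖x‖ < 1) :
    Summable fun j : ℤ ↦ (-1) ^ j * x ^ pentagonal (-j) := by
  refine .of_norm_bounded (((summable_geometric_of_lt_one (norm_nonneg x) hx).comp_injective
    pentagonal_injective).comp_injective neg_injective) fun j ↦ ?_
  simp

lemma hasSum_nat_pow_pentagonal (hx : ‖x‖ < 1) :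
    HasSum (fun k : ℕ ↦ (-1) ^ k * (x ^ pentagonal (-k) - x ^ pentagonal (k + 1)))
      (∑' j : ℤ, (-1) ^ j * x ^ pentagonal (-j)) := by
  convert! (summable_neg_one_zpow_mul_pow_pentagonal hx).hasSum.nat_add_neg_add_one using 2 with k
  rw [neg_neg, zpow_neg, ← inv_zpow, inv_neg_one, ← Nat.cast_succ, zpow_natCast, zpow_natCast,
    pow_succ]
  ring

lemma tprod_one_sub_pow_eq_tsum_pentagonal (hx : ‖x‖ < 1) :
    ∏' n : ℕ, (1 - x ^ (n + 1)) = ∑' j : ℤ, (-1) ^ j * x ^ pentagonal (-j) := by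
  have hgeom := summable_geometric_of_lt_one (norm_nonneg x) hx
  have hsum (k : ℕ) : Summable fun n ↦
      x ^ ((k + 1) * n) * ∏ i ∈ Finset.range (n + 1), (1 - x ^ (k + i + 1)) :=
    (hgeom.mul_right _).of_norm_bounded fun n ↦ norm_pow_mul_prod_one_sub_pow_le hx k n
  have hprod (k : ℕ) : Multipliable fun n ↦ 1 - x ^ (n + k + 1) := by
    simp_rw [sub_eq_add_neg]
    refine multipliable_one_add_of_summable ?_
    simpa [add_assoc] using (summable_nat_add_iff (k + 1)).mpr hgeom
  have hseries := hasSum_nat_pow_pentagonal hx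
  rw [Pentagonal.tprod_one_sub_pow (tendsto_pow_atTop_nhds_zero_of_norm_lt_one hx) hsum hprod
    hseries.summable (tendsto_pentagonal_remainder hx), hseries.tsum_eq]

end PentagonalNumberTheorem

/-! ### The theta series and Ramanujan's recursion -/

/-- The term `(-1)^j (6j+1)^{2n} q^{(6j+1)²/24}` of the theta series `etaTheta n`. -/
def etaThetaTerm (n : ℕ) (j : ℤ) (τ : ℂ) : ℂ :=
  (-1) ^ j * (6 * j + 1) ^ (2 * n) * cexp (π * I / 12 * (6 * j + 1) ^ 2 * τ)

/-- The theta series `∑_j (-1)^j (6j+1)^{2n} q^{(6j+1)²/24}`, which is `q^{1/24}` times the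
numerator of `V_{2n}`. -/
def etaTheta (n : ℕ) (τ : ℂ) : ℂ := ∑' j : ℤ, etaThetaTerm n j τ

lemma hasDerivAt_etaThetaTerm (n : ℕ) (j : ℤ) (τ : ℂ) :
    HasDerivAt (etaThetaTerm n j) (π * I / 12 * etaThetaTerm (n + 1) j τ) τ := by
  convert! (((hasDerivAt_id τ).const_mul _).cexp.const_mul _) using 1
  rw [etaThetaTerm, id_eq]
  ring

lemma norm_etaThetaTerm (n : ℕ) (j : ℤ) (τ : ℂ) :
    ‖etaThetaTerm n j τ‖ =
      |(6 * j + 1 : ℝ)| ^ (2 * n) * Real.exp (-π * (τ.im / 12 * (6 * j + 1) ^ 2)) := by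
  have hbase : (6 * j + 1 : ℂ) = ((6 * j + 1 : ℝ) : ℂ) := by push_cast; rfl
  have hexp : (π * I / 12 * (6 * j + 1) ^ 2 * τ : ℂ) =
      ((π / 12 * (6 * j + 1) ^ 2 : ℝ) : ℂ) * (I * τ) := by
    push_cast
    ring
  rw [etaThetaTerm, norm_mul, norm_mul, norm_zpow, norm_neg, norm_one, one_zpow, one_mul,
    norm_pow, hbase, Complex.norm_real, Real.norm_eq_abs, ← hbase, hexp, Complex.norm_exp,
    re_ofReal_mul, I_mul_re]
  ring_nf

lemma summable_etaTheta_bound (k : ℕ) {T : ℝ} (hT : 0 < T) :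
    Summable fun j : ℤ ↦ |(6 * j + 1 : ℝ)| ^ k * Real.exp (-π * (T / 12 * (6 * j + 1) ^ 2)) := by
  have hinj : Function.Injective fun j : ℤ ↦ 6 * j + 1 := fun a b hab ↦ by
    simpa using hab
  simpa [Function.comp_def] using
    (summable_pow_mul_jacobiTheta₂_term_bound 0 (T := T / 12) (by positivity) k).comp_injective hinj

lemma norm_etaThetaTerm_le (n : ℕ) (j : ℤ) {T : ℝ} {τ : ℂ} (hτ : T ≤ τ.im) :
    ‖etaThetaTerm n j τ‖ ≤
      |(6 * j + 1 : ℝ)| ^ (2 * n) * Real.exp (-π * (T / 12 * (6 * j + 1) ^ 2)) := by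
  rw [norm_etaThetaTerm, neg_mul, neg_mul]
  gcongr

lemma hasDerivAt_etaTheta (n : ℕ) {τ : ℂ} (hτ : 0 < τ.im) :
    HasDerivAt (etaTheta n) (π * I / 12 * etaTheta (n + 1) τ) τ := by
  obtain ⟨T, hT, hTτ⟩ := exists_between hτ
  have hopen : IsOpen {z : ℂ | T < z.im} := isOpen_lt continuous_const continuous_im
  have hbound := summable_etaTheta_bound (2 * n) hT
  have hterm (j : ℤ) : DifferentiableOn ℂ (etaThetaTerm n j) {z | T < z.im} := fun z _ ↦
    (hasDerivAt_etaThetaTerm n j z).differentiableAt.differentiableWithinAt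
  have hle (j : ℤ) (z : ℂ) (hz : z ∈ {z : ℂ | T < z.im}) := norm_etaThetaTerm_le n j (le_of_lt hz)
  have hdiff : DifferentiableAt ℂ (etaTheta n) τ :=
    (differentiableOn_tsum_of_summable_norm hbound hterm hopen hle).differentiableAt
      (hopen.mem_nhds hTτ)
  have hsum := hasSum_deriv_of_summable_norm hbound hterm hopen hle hTτ
  simp only [(hasDerivAt_etaThetaTerm n _ τ).deriv] at hsum
  have hderiv : deriv (etaTheta n) τ = π * I / 12 * etaTheta (n + 1) τ :=
    hsum.tsum_eq.symm.trans tsum_mul_left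
  exact hderiv ▸ hdiff.hasDerivAt

lemma norm_qq_lt_one {τ : ℂ} (hτ : 0 < τ.im) : ‖qq τ‖ < 1 := by
  simpa [qq] using UpperHalfPlane.norm_exp_two_pi_I_lt_one ⟨τ, hτ⟩

lemma etaThetaTerm_eq (n : ℕ) (j : ℤ) (τ : ℂ) :
    etaThetaTerm n j τ = cexp (π * I / 12 * τ) *
      ((-1) ^ j * ((6 * j + 1 : ℤ) : ℂ) ^ (2 * n) * qq τ ^ (j * (3 * j + 1) / 2)) := by
  have hhalf : (2 : ℂ) * (j * (3 * j + 1) / 2 : ℤ) = j * (3 * j + 1) := by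
    exact_mod_cast Int.mul_ediv_cancel' ⟨_, (two_mul_natCast_pentagonal_neg j).symm⟩
  have hexp : cexp (π * I / 12 * (6 * j + 1) ^ 2 * τ) =
      cexp (π * I / 12 * τ) * qq τ ^ (j * (3 * j + 1) / 2) := by
    rw [qq, ← Complex.exp_int_mul, ← Complex.exp_add]
    congr 1
    -- `(6j+1)²/24 = 1/24 + j(3j+1)/2`
    linear_combination (-π * I * τ : ℂ) * hhalf
  rw [etaThetaTerm, hexp]
  push_cast
  ring

lemma Vram_qq_eq (n : ℕ) (τ : ℂ) : Vram n (qq τ) = etaTheta n τ / etaTheta 0 τ := by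
  simp only [etaTheta, etaThetaTerm_eq, tsum_mul_left, mul_div_mul_left _ _ (Complex.exp_ne_zero _),
    Vram, mul_zero, pow_zero, mul_one]

lemma etaTheta_zero {τ : ℂ} (hτ : 0 < τ.im) : etaTheta 0 τ = ModularForm.eta τ := by
  have hpent (j : ℤ) : qq τ ^ (j * (3 * j + 1) / 2) = qq τ ^ pentagonal (-j) := by
    rw [← two_mul_natCast_pentagonal_neg, Int.mul_ediv_cancel_left _ two_ne_zero, zpow_natCast]
  have hq : Function.Periodic.qParam 24 τ = cexp (π * I / 12 * τ) := by
    rw [Function.Periodic.qParam]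
    congr 1
    push_cast
    ring
  have hprod : ∏' k, (1 - ModularForm.eta_q k τ) = ∏' k : ℕ, (1 - qq τ ^ (k + 1)) := by
    simp only [ModularForm.eta_q_eq_pow, qq]
  simp only [etaTheta, etaThetaTerm_eq, hpent, tsum_mul_left, mul_zero, pow_zero, mul_one]
  rw [ModularForm.eta, hq, hprod, tprod_one_sub_pow_eq_tsum_pentagonal (norm_qq_lt_one hτ)]

lemma etaTheta_zero_ne_zero {τ : ℂ} (hτ : 0 < τ.im) : etaTheta 0 τ ≠ 0 :=
  etaTheta_zero hτ ▸ ModularForm.eta_ne_zero hτ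

lemma Vram_zero_qq {τ : ℂ} (hτ : 0 < τ.im) : Vram 0 (qq τ) = 1 := by
  rw [Vram_qq_eq, div_self (etaTheta_zero_ne_zero hτ)]

/-- In terms of `q` this reads `24 q dV_{2n}/dq = V_{2n+2} - V_2 V_{2n}`. -/
lemma hasDerivAt_Vram_qq (n : ℕ) {τ : ℂ} (hτ : 0 < τ.im) :
    HasDerivAt (fun z ↦ Vram n (qq z))
      (π * I / 12 * (Vram (n + 1) (qq τ) - Vram 1 (qq τ) * Vram n (qq τ))) τ := by
  have h0 := etaTheta_zero_ne_zero hτ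
  simp only [Vram_qq_eq]
  convert! (hasDerivAt_etaTheta n hτ).div (hasDerivAt_etaTheta 0 hτ) h0 using 1
  field_simp

lemma Vram_one_qq (z : ℍ) : Vram 1 (qq z) = E2 z := by
  have heta : ModularForm.eta =ᶠ[nhds (z : ℂ)] etaTheta 0 := by
    filter_upwards [isOpen_upperHalfPlaneSet.mem_nhds z.im_pos] with w hw
      using (etaTheta_zero hw).symm
  have hlog := ModularForm.logDeriv_eta_eq_E2 z
  rw [logDeriv_apply, heta.deriv_eq, heta.eq_of_nhds, (hasDerivAt_etaTheta 0 z.im_pos).deriv,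
    mul_div_assoc, ← Vram_qq_eq] at hlog
  exact mul_left_cancel₀ (by simp [Real.pi_ne_zero]) hlog

/-! ### Modular transformation of the generating series and of the completion -/

lemma E2_smul (γ : SL(2, ℤ)) (z : ℍ) :
    E2 (γ • z) = denom γ z ^ 2 * E2 z - 6 * I / π * γ 1 0 * denom γ z := by
  have hdenom := UpperHalfPlane.denom_ne_zero γ z
  have hslash := congrFun (EisensteinSeries.E2_slash_action γ) z
  rw [ModularForm.SL_slash_apply, Pi.sub_apply, Pi.smul_apply, EisensteinSeries.D2, riemannZeta_two,
    smul_eq_mul, zpow_neg, zpow_ofNat, ← div_eq_mul_inv,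
    div_eq_iff (pow_ne_zero 2 hdenom)] at hslash
  rw [hslash]
  field

lemma normSq_denom (g : GL (Fin 2) ℝ) (z : ℂ) :
    (normSq (denom g z) : ℂ) = denom g z * (denom g z - 2 * I * g 1 0 * z.im) := by
  have hconj : z - conj z = 2 * z.im * I := by simpa using sub_conj z
  rw [← mul_conj, denom]
  simp only [map_add, map_mul, conj_ofReal]
  linear_combination -((g 1 0 * z + g 1 1) * g 1 0 : ℂ) * hconj

lemma inv_im_smul (γ : SL(2, ℤ)) (z : ℍ) :
    ((γ • z).im : ℂ)⁻¹ = denom γ z ^ 2 / z.im - 2 * I * γ 1 0 * denom γ z := by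
  have him : (z.im : ℂ) ≠ 0 := ofReal_ne_zero.mpr z.im_ne_zero
  rw [ModularGroup.im_smul_eq_div_normSq, ofReal_div, normSq_denom, inv_div]
  field_simp
  simp [mul_right_comm]

/-- The generating series `∑ (-π²)^n V_{2n}(q) X^n / (2n)!`. -/
def vramSeries (τ : ℂ) : ℂ⟦X⟧ :=
  PowerSeries.mk fun n ↦ (-π ^ 2) ^ n * Vram n (qq τ) / (2 * n).factorial

lemma coeff_vramSeries (n : ℕ) (τ : ℂ) :
    coeff n (vramSeries τ) = (-π ^ 2) ^ n * Vram n (qq τ) / (2 * n).factorial :=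
  PowerSeries.coeff_mk _ _

lemma coeff_zero_vramSeries {τ : ℂ} (hτ : 0 < τ.im) : coeff 0 (vramSeries τ) = 1 := by
  simp [coeff_vramSeries, Vram_zero_qq hτ]

lemma solvesHeatEquationAt_vramSeries (z : ℍ) :
    SolvesHeatEquationAt (4 * (3 * π * I)) (-π ^ 2 * E2 z) vramSeries z := by
  refine ⟨PowerSeries.mk fun n ↦ (-π ^ 2) ^ n * (π * I / 12 *
    (Vram (n + 1) (qq z) - Vram 1 (qq z) * Vram n (qq z))) / (2 * n).factorial, fun n ↦ ?_, ?_⟩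
  · simp only [coeff_vramSeries, PowerSeries.coeff_mk]
    exact ((hasDerivAt_Vram_qq n z.im_pos).const_mul _).div_const _
  · ext n
    have hfactorial : ((2 * (n + 1)).factorial : ℂ) =
        (2 * n + 2) * ((2 * n + 1) * (2 * n).factorial) := by
      rw [mul_add_one, Nat.factorial_succ, Nat.factorial_succ]
      push_cast
      ring
    have h1 : (2 * n + 1 : ℂ) ≠ 0 := by exact_mod_cast (2 * n).succ_ne_zero
    simp only [map_sub, coeff_smul, smul_eq_mul, coeff_heatOp, coeff_vramSeries,
      PowerSeries.coeff_mk, ← Vram_one_qq, hfactorial]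
    field_simp
    linear_combination 12 * (-1) ^ n * π ^ 2 * π ^ (n * 2) * ((2 * n).factorial : ℂ)⁻¹ *
      (Vram (n + 1) (qq z) - Vram 1 (qq z) * Vram n (qq z)) * I_sq

lemma hasDerivAt_smul (γ : SL(2, ℤ)) (z : ℍ) :
    HasDerivAt (fun τ ↦ ((γ • ofComplex τ : ℍ) : ℂ)) (denom γ z ^ 2)⁻¹ z := by
  have hdet : (γ : GL (Fin 2) ℝ).val.det = 1 := Matrix.SpecialLinearGroup.det_coe _
  have hderiv := (UpperHalfPlane.hasStrictDerivAt_smul (hdet ▸ one_pos) z).hasDerivAt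
  rwa [hdet, ofReal_one, one_div] at hderiv

lemma hasDerivAt_denom (g : GL (Fin 2) ℝ) (z : ℍ) : HasDerivAt (denom g) (g 1 0) z := by
  simpa using UpperHalfPlane.hasDerivAt_denom_zpow g 1 z

lemma vramSeries_smul (γ : SL(2, ℤ)) (z : ℍ) :
    vramSeries ↑(γ • z) = expSeries (3 * π * I * γ 1 0 * denom γ z) *
      rescale (denom γ z ^ 2) (vramSeries z) := by
  let κ : ℂ → ℂ := fun τ ↦ 4 * (3 * π * I) * denom γ τ ^ 2
  let ψ : ℂ → ℂ := fun τ ↦ -π ^ 2 * E2 (γ • ofComplex τ)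
  let F : ℂ → ℂ⟦X⟧ := vramSeries ∘ fun τ ↦ ↑(γ • ofComplex τ)
  let G : ℂ → ℂ⟦X⟧ := fun τ ↦
    expSeries (3 * π * I * γ 1 0 * denom γ τ) * rescale (denom γ τ ^ 2) (vramSeries τ)
  have hF (z : ℍ) : SolvesHeatEquationAt (κ z) (ψ z) F z := by
    simpa only [div_inv_eq_mul] using
      (solvesHeatEquationAt_vramSeries (γ • ofComplex z)).comp (φ := fun τ ↦ ↑(γ • ofComplex τ))
        (hasDerivAt_smul γ z) (inv_ne_zero (pow_ne_zero 2 (UpperHalfPlane.denom_ne_zero γ z)))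
  have hG (z : ℍ) : SolvesHeatEquationAt (κ z) (ψ z) G z := by
    have hJ : HasDerivAt (denom γ) (γ 1 0 : ℂ) z := hasDerivAt_denom γ z
    convert! (solvesHeatEquationAt_vramSeries z).expSeries_mul_rescale_sq hJ using 1
    simp only [ψ, ofComplex_apply, E2_smul]
    field
  have h0 (z : ℍ) : coeff 0 (F z) = coeff 0 (G z) := by
    simp only [F, G, Function.comp_apply, PowerSeries.coeff_mul, Finset.Nat.antidiagonal_zero,
      Finset.sum_singleton, coeff_rescale, coeff_expSeries, coeff_zero_vramSeries z.im_pos,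
      coeff_zero_vramSeries (UpperHalfPlane.im_pos _), pow_zero, Nat.factorial_zero, Nat.cast_one,
      div_one, mul_one]
  have hEq : Set.EqOn F G upperHalfPlaneSet := SolvesHeatEquationAt.eqOn (κ := κ) (ψ := ψ)
    isOpen_upperHalfPlaneSet (fun τ hτ ↦ hF ⟨τ, hτ⟩) (fun τ hτ ↦ hG ⟨τ, hτ⟩) fun τ hτ ↦ h0 ⟨τ, hτ⟩
  simpa only [F, G, Function.comp_apply, ofComplex_apply] using hEq z.im_pos

/-- The coefficient of `v^{-j}` in `V̂_{2n}(τ)`; only `j ≤ n` is meaningful. -/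
def vhatCoeff (n j : ℕ) (τ : ℂ) : ℂ :=
  (3 * π / 2) ^ j / j.factorial * coeff (n - j) (vramSeries τ)

lemma Vhat_eq_sum_div_im_pow (n : ℕ) (τ : ℂ) :
    Vhat n τ = ∑ j ∈ Finset.range (n + 1), vhatCoeff n j τ / τ.im ^ j := by
  refine Finset.sum_congr rfl fun j hj ↦ ?_
  obtain ⟨m, rfl⟩ := Nat.exists_eq_add_of_le (Finset.mem_range_succ_iff.mp hj)
  have hpi : 2 * (j + m) - j = j + 2 * m := by lia
  have hfactorial : 2 * (j + m) - 2 * j = 2 * m := by lia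
  have hsign : (-1 : ℂ) ^ (j + m + j) = (-1) ^ m := by
    rw [add_right_comm, ← two_mul, pow_add, pow_mul, neg_one_sq, one_pow, one_mul]
  rw [vhatCoeff, coeff_vramSeries, Nat.add_sub_cancel_left, hpi, hfactorial, hsign, neg_pow (_ ^ 2),
    pow_add, pow_mul, div_pow, mul_pow, mul_pow]
  field

lemma Vhat_eq_coeff (n : ℕ) (τ : ℂ) :
    Vhat n τ = coeff n (expSeries (3 * π / 2 * (τ.im : ℂ)⁻¹) * vramSeries τ) := by
  rw [Vhat_eq_sum_div_im_pow, PowerSeries.coeff_mul,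
    Finset.Nat.sum_antidiagonal_eq_sum_range_succ_mk]
  refine Finset.sum_congr rfl fun j _ ↦ ?_
  rw [vhatCoeff, coeff_expSeries, mul_pow, inv_pow]
  ring

lemma Vhat_smul (n : ℕ) (γ : SL(2, ℤ)) (z : ℍ) :
    Vhat n ↑(γ • z) = denom γ z ^ (2 * n) * Vhat n z := by
  have hexp : 3 * π / 2 * ((γ • z).im : ℂ)⁻¹ + 3 * π * I * γ 1 0 * denom γ z =
      3 * π / 2 * (z.im : ℂ)⁻¹ * denom γ z ^ 2 := by
    rw [inv_im_smul]
    ring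
  have hseries : expSeries (3 * π / 2 * ((γ • z).im : ℂ)⁻¹) * vramSeries ↑(γ • z) =
      rescale (denom γ z ^ 2) (expSeries (3 * π / 2 * (z.im : ℂ)⁻¹) * vramSeries z) := by
    rw [vramSeries_smul, ← mul_assoc, expSeries_mul_expSeries, hexp, map_mul, rescale_expSeries]
  rw [Vhat_eq_coeff, Vhat_eq_coeff, pow_mul, ← coeff_rescale, UpperHalfPlane.coe_im,
    UpperHalfPlane.coe_im, hseries]

lemma differentiableOn_vhatCoeff (n j : ℕ) :
    DifferentiableOn ℂ (vhatCoeff n j) {τ | 0 < τ.im} := fun τ hτ ↦ by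
  obtain ⟨_, hderiv, _⟩ := solvesHeatEquationAt_vramSeries ⟨τ, hτ⟩
  exact ((hderiv (n - j)).differentiableAt.const_mul _).differentiableWithinAt

lemma vhatCoeff_self {τ : ℂ} (hτ : 0 < τ.im) (n : ℕ) :
    vhatCoeff n n τ = (3 * π / 2) ^ n / n.factorial := by
  rw [vhatCoeff, Nat.sub_self, coeff_zero_vramSeries hτ, mul_one]

/-- For every `n ≥ 0`, the completion `V̂_{2n}` transforms like a modular
form of weight `2n` on SL₂(ℤ), and is a polynomial in `1/v` of degree exactly `n` with
holomorphic coefficients; hence it is an almost holomorphic modular form of weight `2n` and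
depth `n`. -/
theorem Vhat_almost_holomorphic_modular (n : ℕ) :
    (∀ a b c d : ℤ, a * d - b * c = 1 → ∀ τ : ℂ, 0 < τ.im →
      Vhat n ((a * τ + b) / (c * τ + d)) = (c * τ + d) ^ (2 * n) * Vhat n τ) ∧
    (∃ f : ℕ → ℂ → ℂ,
      (∀ j, j ≤ n → DifferentiableOn ℂ (f j) {τ : ℂ | 0 < τ.im}) ∧
      (∃ τ : ℂ, 0 < τ.im ∧ f n τ ≠ 0) ∧
      (∀ τ : ℂ, 0 < τ.im →
        Vhat n τ = ∑ j ∈ Finset.range (n + 1), f j τ / (τ.im : ℂ) ^ j)) := by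
  refine ⟨fun a b c d h τ hτ ↦ ?_, vhatCoeff n, fun j _ ↦ differentiableOn_vhatCoeff n j,
    ⟨I, by simp, ?_⟩, fun τ _ ↦ Vhat_eq_sum_div_im_pow n τ⟩
  · let γ : SL(2, ℤ) := ⟨!![a, b; c, d], by rw [Matrix.det_fin_two_of, h]⟩
    have hsmul := Vhat_smul n γ ⟨τ, hτ⟩
    rw [UpperHalfPlane.coe_specialLinearGroup_apply, ModularGroup.denom_apply] at hsmul
    simpa [γ] using hsmul
  · rw [vhatCoeff_self (by simp)]
    simp [Real.pi_ne_zero, Nat.factorial_ne_zero]
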